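/- Let X ⊆ ℕ^d be a monotone set and Q a complex polynomial in d variables with Q(M_z^X) ≠ 0. Then there exists a multiplier ψ of H_d such that ‖ψ‖_{M(H_d)} ≤ ‖Q(M_z^X)‖ and M_ψ^*|_{H_d(X)} = (Q(M_z^X))^*; consequently ‖Q(M_z^X)‖ = ‖M_ψ|_{H_d(X)}‖. -/

import Mathlib

open scoped BigOperators ComplexConjugate

noncomputable section

namespace DruryArveson

/-- Multi-indices. -/
abbrev Idx (d : ℕ) := Fin d → ℕ

/-- The weight `β(n) = |n|!/n!`. -/
def beta (d : ℕ) (n : Idx d) : ℝ :=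
  ((∑ j, n j).factorial : ℝ) / ∏ j, ((n j).factorial : ℝ)

/-- standard basis multi-index `e_j`. -/
def e (d : ℕ) (j : Fin d) : Idx d := fun i => if i = j then 1 else 0

/-- A set `X ⊆ ℕ^d` is monotone if its complement is shift invariant. -/
def MonotoneSet (d : ℕ) (X : Set (Idx d)) : Prop :=
  ∀ n, n ∉ X → ∀ j, n + e d j ∉ X

/-- membership in the Drury–Arveson space (coefficientwise). -/
def MemHd (d : ℕ) (a : Idx d → ℂ) : Prop :=
  Summable fun n => ‖a n‖ ^ 2 / beta d n

/-- the Drury–Arveson norm. -/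
def hdNorm (d : ℕ) (a : Idx d → ℂ) : ℝ :=
  Real.sqrt (∑' n, ‖a n‖ ^ 2 / beta d n)

/-- the Drury–Arveson inner product. -/
def hdInner (d : ℕ) (a b : Idx d → ℂ) : ℂ :=
  ∑' n, a n * conj (b n) / (beta d n : ℂ)

/-- membership in `H_d(X)`. -/
def MemHdX (d : ℕ) (X : Set (Idx d)) (a : Idx d → ℂ) : Prop :=
  (∀ n ∉ X, a n = 0) ∧ MemHd d a

/-- membership in `ℓ²(X, β)`. -/
def MemL2 (d : ℕ) (X : Set (Idx d)) (g : Idx d → ℂ) : Prop :=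
  (∀ n ∉ X, g n = 0) ∧ Summable fun n => ‖g n‖ ^ 2 * beta d n

/-- the norm of `ℓ²(ℕ^d, β)`. -/
def l2Norm (d : ℕ) (g : Idx d → ℂ) : ℝ :=
  Real.sqrt (∑' n, ‖g n‖ ^ 2 * beta d n)

/-- the inner product of `ℓ²(ℕ^d, β)`. -/
def l2Inner (d : ℕ) (g h : Idx d → ℂ) : ℂ :=
  ∑' n, g n * conj (h n) * (beta d n : ℂ)

/-- the compressed backshift `B_j^X = P_X B_j|_{ℓ²(X,β)}`. -/
def BXop (d : ℕ) (X : Set (Idx d)) (j : Fin d) (g : Idx d → ℂ) : Idx d → ℂ :=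
  X.indicator fun n => g (n + e d j)

/-- ordered power `(T_1)^{k_1} ∘ ⋯ ∘ (T_d)^{k_d}` of a `d`-tuple of maps. -/
def opPow (d : ℕ) {α : Type*} (T : Fin d → (α → α)) (k : Idx d) : α → α :=
  (List.ofFn fun j => (T j)^[k j]).foldr (· ∘ ·) id

/-- multiplication by `z_j` on coefficients. -/
def Mop (d : ℕ) (j : Fin d) (a : Idx d → ℂ) : Idx d → ℂ :=
  fun n => if 0 < n j then a (n - e d j) else 0

/-- the compressed multiplication `M_j^X = P_X M_j|_{H_d(X)}`. -/
def MopX (d : ℕ) (X : Set (Idx d)) (j : Fin d) (a : Idx d → ℂ) : Idx d → ℂ :=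
  X.indicator (Mop d j a)

/-- the Taylor coefficients of a polynomial of `d` variables. -/
def Qhat (d : ℕ) (Q : MvPolynomial (Fin d) ℂ) (n : Idx d) : ℂ :=
  Q.coeff (Finsupp.equivFunOnFinite.symm n)

/-- `Q(T)` for a `d`-tuple of maps on the coefficient space. -/
def polyOp (d : ℕ) (Q : MvPolynomial (Fin d) ℂ)
    (T : Fin d → ((Idx d → ℂ) → (Idx d → ℂ))) (a : Idx d → ℂ) : Idx d → ℂ :=
  fun n => ∑ k ∈ Q.support, Q.coeff k * opPow d T (⇑k) a n

/-- operator norm of a map with respect to the `ℓ²(X,β)` norm. -/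
def opNormL2 (d : ℕ) (X : Set (Idx d)) (T : (Idx d → ℂ) → (Idx d → ℂ)) : ℝ :=
  sInf {C | 0 ≤ C ∧ ∀ g, MemL2 d X g → l2Norm d (T g) ≤ C * l2Norm d g}

/-- operator norm of a map with respect to the `H_d(X)` norm. -/
def opNormHdX (d : ℕ) (X : Set (Idx d)) (T : (Idx d → ℂ) → (Idx d → ℂ)) : ℝ :=
  sInf {C | 0 ≤ C ∧ ∀ a, MemHdX d X a → hdNorm d (T a) ≤ C * hdNorm d a}

/-- coefficients of the product `φ · f` of two power series. -/
def mconv (d : ℕ) (φ a : Idx d → ℂ) (m : Idx d) : ℂ :=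
  ∑ k ∈ Finset.Iic m, φ k * a (m - k)

/-- `φ` is a multiplier of `H_d`. -/
def IsMultiplier (d : ℕ) (φ : Idx d → ℂ) : Prop :=
  ∀ a, MemHd d a → MemHd d (mconv d φ a)

/-- the multiplier norm `‖φ‖_{M(H_d)}`. -/
def multNorm (d : ℕ) (φ : Idx d → ℂ) : ℝ :=
  sInf {C | 0 ≤ C ∧ ∀ a, MemHd d a → hdNorm d (mconv d φ a) ≤ C * hdNorm d a}

/-- `A^n = A_1^{n_1} ⋯ A_d^{n_d}` for a tuple of bounded operators. -/
def ApowCLM (d : ℕ) {H : Type*} [NormedAddCommGroup H] [NormedSpace ℂ H]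
    (A : Fin d → H →L[ℂ] H) (n : Idx d) : H →L[ℂ] H :=
  (List.ofFn fun j => A j ^ n j).prod

/-- `Q(A) = ∑ c_k A^k` for a tuple of bounded operators. -/
def QevalCLM (d : ℕ) {H : Type*} [NormedAddCommGroup H] [NormedSpace ℂ H]
    (A : Fin d → H →L[ℂ] H) (Q : MvPolynomial (Fin d) ℂ) : H →L[ℂ] H :=
  ∑ k ∈ Q.support, Q.coeff k • ApowCLM d A ⇑k

/-- monomial `z^n`. -/
def mpow (d : ℕ) (z : Fin d → ℂ) (n : Idx d) : ℂ := ∏ j, z j ^ n j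

/-!
The function `φ` compresses to an operator of norm at most `N` on `H_d(X)` exactly if the kernel
`(N² - φ(z) φ(w)^*) / (1 - ⟨z, w⟩)` is positive on `X`, that is, if its coefficients are a Gram
matrix `⟨v_m, v_n⟩` for `m, n ∈ X`. Multiplying by `1 - ⟨z, w⟩` turns this into the identity of the
Gram matrices of `(N δ_{n,0}, (v_{n - e_j})_j)` and `(φ(n)^*, v_n)`, so some contraction `V` maps
the former to the latter. Monotonicity of `X` makes the first vector depend only on `v_m` with
`m < n` in `X`; hence iterating `V` defines `v_n` and `ψ(n)` for all `n ∈ ℕ^d`, extending the given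
ones, and as `V` is a contraction the kernel of `ψ` is positive on all of `ℕ^d`.
-/

open scoped ComplexOrder InnerProductSpace

section Operators

lemma exists_contraction_of_norm_le {𝕜 P E F : Type*} [RCLike 𝕜] [AddCommGroup P] [Module 𝕜 P]
    [NormedAddCommGroup E] [InnerProductSpace 𝕜 E] [CompleteSpace E] [NormedAddCommGroup F]
    [NormedSpace 𝕜 F] [CompleteSpace F] {f : P →ₗ[𝕜] E} {g : P →ₗ[𝕜] F}
    (h : ∀ p, ‖g p‖ ≤ ‖f p‖) : ∃ V : E →L[𝕜] F, ‖V‖ ≤ 1 ∧ ∀ p, V (f p) = g p := by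
  let R := (LinearMap.range f).topologicalClosure
  let f' : P →ₗ[𝕜] R := f.codRestrict R fun p =>
    Submodule.le_topologicalClosure _ (LinearMap.mem_range_self f p)
  have hdense : DenseRange f' := by
    intro x
    rw [closure_subtype, ← Set.range_comp]
    exact x.2
  have hbound : ∀ p, ‖g p‖ ≤ 1 * ‖f' p‖ := fun p => by
    rw [one_mul]
    exact h p
  refine ⟨(g.extendOfNorm f').comp R.orthogonalProjectionOnto, ?_, fun p => ?_⟩
  · exact (ContinuousLinearMap.opNorm_comp_le _ _).trans (mul_le_one₀
      (LinearMap.opNorm_extendOfNorm_le hdense zero_le_one hbound) (norm_nonneg _)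
      R.orthogonalProjectionOnto_norm_le)
  · have hproj : R.orthogonalProjectionOnto (f p) = f' p :=
      Submodule.orthogonalProjectionOnto_mem_subspace_eq_self (f' p)
    rw [ContinuousLinearMap.comp_apply, hproj, LinearMap.extendOfNorm_eq hdense ⟨1, hbound⟩]

theorem exists_continuousLinearMap_inner_eq {ι 𝕜 H K : Type*} [RCLike 𝕜] [NormedAddCommGroup H]
    [InnerProductSpace 𝕜 H] [CompleteSpace H] [NormedAddCommGroup K] [InnerProductSpace 𝕜 K]
    [CompleteSpace K] {c : ι → K} (hc : Function.Injective fun y i => ⟪c i, y⟫_𝕜) {w : ι → H}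
    (h : ∀ x, ∃ y, ∀ i, ⟪c i, y⟫_𝕜 = ⟪w i, x⟫_𝕜) :
    ∃ A : H →L[𝕜] K, ∀ x i, ⟪c i, A x⟫_𝕜 = ⟪w i, x⟫_𝕜 := by
  choose T hT using h
  let L : H →ₗ[𝕜] K :=
    { toFun := T
      map_add' := fun x y => hc <| funext fun i => by simp only [inner_add_right, hT]
      map_smul' := fun a x => hc <| funext fun i => by
        simp only [inner_smul_right, hT, RingHom.id_apply] }
  have hclosed : ∀ (u : ℕ → H) (x y), Filter.Tendsto u Filter.atTop (nhds x) →
      Filter.Tendsto (L ∘ u) Filter.atTop (nhds y) → y = L x := fun u x y hu hLu =>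
    hc <| funext fun i => by
      have hleft : Filter.Tendsto (fun k => ⟪c i, L (u k)⟫_𝕜) Filter.atTop (nhds ⟪c i, y⟫_𝕜) :=
        tendsto_const_nhds.inner hLu
      have hright : Filter.Tendsto (fun k => ⟪w i, u k⟫_𝕜) Filter.atTop (nhds ⟪w i, x⟫_𝕜) :=
        tendsto_const_nhds.inner hu
      exact (tendsto_nhds_unique hleft
        (hright.congr fun k => (hT (u k) i).symm)).trans (hT x i).symm
  exact ⟨⟨L, L.continuous_of_seq_closed_graph hclosed⟩, hT⟩

end Operators

section KernelForm

variable {ι : Type*}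

/-- The Hermitian form of a matrix over a possibly infinite index set, as a linear function of the
matrix. -/
def kernelForm (x : ι →₀ ℂ) : Matrix ι ι ℂ →ₗ[ℂ] ℂ where
  toFun K := x.sum fun i xi => x.sum fun j xj => star xi * K i j * xj
  map_add' K L := by
    simp only [Matrix.add_apply, mul_add, add_mul, Finsupp.sum_add]
  map_smul' c K := by
    simp only [Matrix.smul_apply, smul_eq_mul, RingHom.id_apply, Finsupp.mul_sum, mul_assoc,
      mul_left_comm _ c]

lemma kernelForm_apply (x : ι →₀ ℂ) (K : Matrix ι ι ℂ) :
    kernelForm x K = x.sum fun i xi => x.sum fun j xj => star xi * K i j * xj := rfl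

lemma posSemidef_iff_kernelForm {K : Matrix ι ι ℂ} :
    K.PosSemidef ↔ K.IsHermitian ∧ ∀ x, 0 ≤ kernelForm x K := Iff.rfl

variable {H : Type*} [NormedAddCommGroup H] [InnerProductSpace ℂ H]

lemma kernelForm_gram (x : ι →₀ ℂ) (u : ι → H) :
    kernelForm x (Matrix.gram ℂ u) = (‖x.sum fun i z => z • u i‖ ^ 2 : ℝ) := by
  set w := x.sum fun i z => z • u i with hw
  have hnorm : ((‖w‖ ^ 2 : ℝ) : ℂ) = ⟪w, w⟫_ℂ := by simp
  rw [hnorm, hw, kernelForm_apply, Finsupp.sum_inner]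
  simp only [Finsupp.inner_sum, inner_smul_left, inner_smul_right, Matrix.gram_apply]
  exact Finsupp.sum_congr fun i _ => Finsupp.sum_congr fun j _ => by
    rw [starRingEnd_apply]
    ring

lemma posSemidef_gram (u : ι → H) : (Matrix.gram ℂ u).PosSemidef := by
  refine posSemidef_iff_kernelForm.2 ⟨Matrix.isHermitian_gram ℂ u, fun x => ?_⟩
  rw [kernelForm_gram]
  exact Complex.zero_le_real.2 (sq_nonneg _)

end KernelForm

section Gram

variable {ι : Type*}

theorem exists_gram_eq.{u} {κ : Type u} {K : Matrix κ κ ℂ} (hK : K.PosSemidef) :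
    ∃ (H : Type u) (_ : NormedAddCommGroup H) (_ : InnerProductSpace ℂ H) (_ : CompleteSpace H)
      (v : κ → H), Matrix.gram ℂ v = K := by
  let L : Matrix κ κ (ℂ →L[ℂ] ℂ) := Matrix.of fun i j => K i j • 1
  have hL : L.PosSemidef := by
    refine ((RKHS.posSemidef_tfae (𝕜 := ℂ) (K := L)).out 0 2 rfl rfl).2 ⟨?_, fun x => ?_⟩
    · ext i j
      simp [L, ← hK.isHermitian.apply i j]
    · have hentry : ∀ i j (z w : ℂ), ⟪L j i z, w⟫_ℂ = star z * K i j * w := fun i j z w => by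
        simp only [L, ← hK.isHermitian.apply i j, Matrix.of_apply, smul_apply,
          one_apply_eq_self, smul_eq_mul, RCLike.inner_apply, RCLike.star_def, map_mul]
        ring
      simp only [hentry]
      exact (Complex.nonneg_iff.1 ((posSemidef_iff_kernelForm.1 hK).2 x)).1
  have : Fact L.PosSemidef := ⟨hL⟩
  refine ⟨RKHS.OfKernel L, inferInstance, inferInstance, inferInstance,
    fun i => RKHS.kerFun (RKHS.OfKernel L) i (1 : ℂ), ?_⟩
  ext i j
  rw [Matrix.gram_apply, ← RKHS.kernel_inner, RKHS.OfKernel.kernel_ofKernel]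
  simp [L, ← hK.isHermitian.apply i j]

variable {E F : Type*} [NormedAddCommGroup E] [InnerProductSpace ℂ E] [NormedAddCommGroup F]
  [InnerProductSpace ℂ F]

lemma gram_toLp_prod (u : ι → E) (v : ι → F) :
    Matrix.gram ℂ (fun i => WithLp.toLp 2 (u i, v i)) = Matrix.gram ℂ u + Matrix.gram ℂ v := by
  ext i j
  simp [Matrix.gram_apply]

lemma gram_toLp_pi {κ : Type*} [Fintype κ] (u : κ → ι → E) :
    Matrix.gram ℂ (fun i => WithLp.toLp 2 fun k => u k i) = ∑ k, Matrix.gram ℂ (u k) := by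
  ext i j
  simp [Matrix.gram_apply, Matrix.sum_apply, PiLp.inner_apply]

theorem posSemidef_gram_sub_gram (v : ι → E) {V : E →L[ℂ] F} (hV : ‖V‖ ≤ 1) :
    (Matrix.gram ℂ v - Matrix.gram ℂ (V ∘ v)).PosSemidef := by
  have hsplit : Matrix.gram ℂ v - Matrix.gram ℂ (V ∘ v)
      = (‖V‖ ^ 2 • Matrix.gram ℂ v - Matrix.gram ℂ (V ∘ v)) + (1 - ‖V‖ ^ 2) • Matrix.gram ℂ v := by
    module
  rw [hsplit]
  exact (Matrix.posSemidef_opNorm_smul_gram_sub_gram v V).add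
    ((posSemidef_gram v).smul (sub_nonneg.2 (pow_le_one₀ (norm_nonneg V) hV)))

theorem exists_contraction_of_posSemidef [CompleteSpace E] [CompleteSpace F] {u : ι → E}
    {v : ι → F} (h : (Matrix.gram ℂ u - Matrix.gram ℂ v).PosSemidef) :
    ∃ V : E →L[ℂ] F, ‖V‖ ≤ 1 ∧ ∀ i, V (u i) = v i := by
  have hnorm : ∀ x, ‖Finsupp.linearCombination ℂ v x‖ ≤ ‖Finsupp.linearCombination ℂ u x‖ := by
    intro x
    have hx := (posSemidef_iff_kernelForm.1 h).2 x
    rw [map_sub, kernelForm_gram, kernelForm_gram, sub_nonneg, Complex.real_le_real] at hx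
    exact (pow_le_pow_iff_left₀ (norm_nonneg _) (norm_nonneg _) two_ne_zero).1 hx
  obtain ⟨V, hV, hVf⟩ := exists_contraction_of_norm_le hnorm
  exact ⟨V, hV, fun i => by simpa using hVf (Finsupp.single i 1)⟩

end Gram

section Indices

variable {d : ℕ}

instance decidableLEIdx : DecidableLE (Idx d) :=
  fun m n => inferInstanceAs (Decidable (∀ i, m i ≤ n i))

lemma sum_e (j : Fin d) : ∑ i, e d j i = 1 := by
  simp [e]

lemma e_le_iff {j : Fin d} {n : Idx d} : e d j ≤ n ↔ 0 < n j := by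
  refine ⟨fun h => by simpa [e, Nat.succ_le_iff] using h j, fun h i => ?_⟩
  by_cases hi : i = j <;> simp [e, hi, Nat.succ_le_iff, h]

lemma tsub_e_lt {j : Fin d} {n : Idx d} (h : e d j ≤ n) : n - e d j < n := by
  refine lt_of_le_of_ne tsub_le_self fun heq => ?_
  have hj : n j - 1 = n j := by simpa [e] using congrFun heq j
  have := e_le_iff.1 h
  omega

lemma monotone_of_le_add_e {α : Type*} [Preorder α] {f : Idx d → α}
    (h : ∀ n j, f n ≤ f (n + e d j)) : Monotone f := by
  refine (monotone_iff_forall_covBy f).2 fun m n hmn => ?_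
  obtain ⟨j, hj, hne⟩ := Pi.covBy_iff.1 hmn
  have hn : n = m + e d j := by
    ext i
    by_cases hi : i = j
    · simpa [e, hi] using (Nat.covBy_iff_add_one_eq.1 hj).symm
    · simp [e, hi, hne i hi]
  exact hn ▸ h m j

lemma MonotoneSet.isLowerSet {X : Set (Idx d)} (hX : MonotoneSet d X) : IsLowerSet X := by
  intro m n hnm hm
  by_contra hn
  exact monotone_of_le_add_e (f := (· ∉ X)) (fun n j hn => hX n hn j) hnm hn hm

/-- Translation of a family indexed by multi-indices, with value zero outside `l + ℕ^d`; on
Taylor coefficients this is multiplication by the monomial `z^l`. -/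
def shift {M : Type*} [Zero M] (l : Idx d) (u : Idx d → M) (n : Idx d) : M :=
  if l ≤ n then u (n - l) else 0

section Shift

variable {M : Type*} [Zero M] (u : Idx d → M)

lemma shift_apply_add (l n : Idx d) : shift l u (n + l) = u n := by
  simp [shift]

lemma shift_of_le {l n : Idx d} (h : l ≤ n) : shift l u n = u (n - l) :=
  if_pos h

lemma shift_of_not_le {l n : Idx d} (h : ¬ l ≤ n) : shift l u n = 0 :=
  if_neg h

lemma shift_congr {u v : Idx d → M} {l n : Idx d} (h : l ≤ n → u (n - l) = v (n - l)) :
    shift l u n = shift l v n :=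
  if_ctx_congr Iff.rfl h fun _ => rfl

lemma shift_zero : shift 0 u = u := by
  ext n
  simp [shift]

lemma shift_shift (k l : Idx d) : shift l (shift k u) = shift (k + l) u := by
  ext n
  by_cases hl : l ≤ n
  · simp only [shift, hl, le_tsub_iff_right hl, if_true, tsub_tsub, add_comm k l]
  · rw [shift_of_not_le _ hl, shift_of_not_le _ fun h => hl (le_add_self.trans h)]

end Shift

lemma sum_Iic_shift_smul {R M : Type*} [Zero R] [AddCommMonoid M] [SMulWithZero R M]
    (l p : Idx d) (f : Idx d → R) (g : Idx d → M) :
    ∑ k ∈ Finset.Iic p, shift l f k • g k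
      = if l ≤ p then ∑ k ∈ Finset.Iic (p - l), f k • g (k + l) else 0 := by
  split_ifs with hl
  · have himage : (Finset.Iic (p - l)).image (· + l) = {k ∈ Finset.Iic p | l ≤ k} := by
      ext k
      simp only [Finset.mem_image, Finset.mem_Iic, Finset.mem_filter, le_tsub_iff_right hl]
      exact ⟨by rintro ⟨i, hi, rfl⟩; exact ⟨hi, le_add_self⟩,
        fun h => ⟨k - l, by simpa [tsub_add_cancel_of_le h.2] using h.1,
          tsub_add_cancel_of_le h.2⟩⟩
    rw [← Finset.sum_filter_of_ne (p := (l ≤ ·)), ← himage,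
      Finset.sum_image (add_left_injective l).injOn]
    · simp only [shift_apply_add]
    · intro k _ hk
      by_contra h
      simp [shift_of_not_le f h] at hk
  · refine Finset.sum_eq_zero fun k hk => ?_
    rw [shift_of_not_le f fun h => hl (h.trans (Finset.mem_Iic.1 hk)), zero_smul]

lemma sum_Iic_tsub {M : Type*} [AddCommMonoid M] (n : Idx d) (f : Idx d → Idx d → M) :
    ∑ k ∈ Finset.Iic n, f k (n - k) = ∑ k ∈ Finset.Iic n, f (n - k) k := by
  have hinv : ∀ k ∈ Finset.Iic n, n - (n - k) = k := fun k hk => funext fun i =>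
    Nat.sub_sub_self (Finset.mem_Iic.1 hk i)
  exact Finset.sum_nbij' (n - ·) (n - ·) (by simp) (by simp) hinv hinv
    fun k hk => by rw [hinv k hk]

lemma Mop_eq_shift (j : Fin d) : Mop d j = shift (e d j) := by
  ext a n
  simp only [Mop, shift, e_le_iff]

end Indices

section Beta

variable {d : ℕ}

lemma beta_pos (n : Idx d) : 0 < beta d n := by
  unfold beta
  positivity

lemma beta_zero : beta d 0 = 1 := by
  simp [beta]

lemma prod_factorial_add_e (n : Idx d) (j : Fin d) :
    ∏ i, ((n + e d j) i).factorial = (n j + 1) * ∏ i, (n i).factorial := by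
  have hne : ∀ i ∈ Finset.univ.erase j, ((n + e d j) i).factorial = (n i).factorial := by
    intro i hi
    simp [e, Finset.ne_of_mem_erase hi]
  rw [← Finset.mul_prod_erase _ _ (Finset.mem_univ j), Finset.prod_congr rfl hne,
    ← Finset.mul_prod_erase _ _ (Finset.mem_univ j), ← mul_assoc]
  simp [e, Nat.factorial_succ]

lemma beta_add_e (n : Idx d) (j : Fin d) :
    beta d (n + e d j) * (n j + 1) = beta d n * (∑ i, (n i : ℝ) + 1) := by
  have hsum : ∑ i, (n + e d j) i = ∑ i, n i + 1 := by
    simp only [Pi.add_apply, Finset.sum_add_distrib, sum_e]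
  have hprod : ∏ i, (((n + e d j) i).factorial : ℝ) = (n j + 1) * ∏ i, ((n i).factorial : ℝ) := by
    exact_mod_cast prod_factorial_add_e n j
  rw [beta, beta, hsum, hprod, Nat.factorial_succ]
  push_cast
  field

lemma shift_e_beta_mul_sum (j : Fin d) (m : Idx d) :
    shift (e d j) (beta d) m * ∑ i, (m i : ℝ) = beta d m * m j := by
  by_cases h : e d j ≤ m
  · obtain ⟨n, rfl⟩ : ∃ n, m = n + e d j := ⟨m - e d j, (tsub_add_cancel_of_le h).symm⟩
    have hsum : ∑ i, ((n + e d j) i : ℝ) = ∑ i, (n i : ℝ) + 1 := by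
      simp only [Pi.add_apply, Nat.cast_add, Finset.sum_add_distrib]
      exact_mod_cast congrArg _ (sum_e j)
    have hj : ((n + e d j) j : ℝ) = n j + 1 := by simp [e]
    rw [shift_apply_add, hsum, hj, beta_add_e]
  · have hj : m j = 0 := by simpa [e_le_iff] using h
    rw [shift_of_not_le _ h, hj]
    simp

lemma sum_shift_e_beta {m : Idx d} (hm : m ≠ 0) : ∑ j, shift (e d j) (beta d) m = beta d m := by
  have hpos : (∑ i, (m i : ℝ)) ≠ 0 := by
    contrapose! hm
    ext i
    exact_mod_cast (Finset.sum_eq_zero_iff_of_nonneg (by simp)).1 hm i (Finset.mem_univ i)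
  apply mul_right_cancel₀ hpos
  rw [Finset.sum_mul, Finset.mul_sum]
  exact Finset.sum_congr rfl fun j _ => shift_e_beta_mul_sum j m

lemma shift_beta_nonneg (l n : Idx d) : 0 ≤ shift l (beta d) n := by
  unfold shift
  split_ifs
  exacts [(beta_pos _).le, le_rfl]

lemma beta_monotone : Monotone (beta d) := by
  refine monotone_of_le_add_e fun n j => ?_
  have hne : n + e d j ≠ 0 := fun h => by simpa [e] using congrFun h j
  calc beta d n = shift (e d j) (beta d) (n + e d j) := (shift_apply_add _ _ _).symm
    _ ≤ ∑ i, shift (e d i) (beta d) (n + e d j) :=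
        Finset.single_le_sum (f := fun i => shift (e d i) (beta d) (n + e d j))
          (fun i _ => shift_beta_nonneg _ _) (Finset.mem_univ j)
    _ = beta d (n + e d j) := sum_shift_e_beta hne

end Beta

section Kernels

variable {d : ℕ}

/-- Multiplication of a kernel `K(z, w) = ∑ K m n z^m w̄^n` by `(z w̄)^l`, on coefficients. -/
def shiftKernel (l : Idx d) : Matrix (Idx d) (Idx d) ℂ →ₗ[ℂ] Matrix (Idx d) (Idx d) ℂ where
  toFun K := Matrix.of fun m n => if l ≤ m ⊓ n then K (m - l) (n - l) else 0
  map_add' K L := by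
    ext m n
    by_cases h : l ≤ m ⊓ n <;> simp [-le_inf_iff, h]
  map_smul' c K := by
    ext m n
    by_cases h : l ≤ m ⊓ n <;> simp [-le_inf_iff, h]

lemma shiftKernel_apply (l : Idx d) (K : Matrix (Idx d) (Idx d) ℂ) (m n : Idx d) :
    shiftKernel l K m n = if l ≤ m ⊓ n then K (m - l) (n - l) else 0 := rfl

lemma shiftKernel_apply_add (l : Idx d) (K : Matrix (Idx d) (Idx d) ℂ) (m n : Idx d) :
    shiftKernel l K (m + l) (n + l) = K m n := by
  simp [shiftKernel_apply]

lemma shiftKernel_zero (K : Matrix (Idx d) (Idx d) ℂ) : shiftKernel 0 K = K := by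
  ext m n
  simp [shiftKernel_apply]

lemma shiftKernel_shiftKernel (k l : Idx d) (K : Matrix (Idx d) (Idx d) ℂ) :
    shiftKernel l (shiftKernel k K) = shiftKernel (k + l) K := by
  ext m n
  by_cases h : l ≤ m ⊓ n
  · obtain ⟨hm, hn⟩ := le_inf_iff.1 h
    simp [shiftKernel_apply, hm, hn, le_tsub_iff_right, tsub_tsub, add_comm l k]
  · have h' : ¬ k + l ≤ m ⊓ n := fun h' => h (le_add_self.trans h')
    rw [shiftKernel_apply, if_neg h, shiftKernel_apply, if_neg h']

lemma shiftKernel_gram {H : Type*} [NormedAddCommGroup H] [InnerProductSpace ℂ H] (l : Idx d)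
    (u : Idx d → H) : shiftKernel l (Matrix.gram ℂ u) = Matrix.gram ℂ (shift l u) := by
  ext m n
  by_cases hm : l ≤ m <;> by_cases hn : l ≤ n <;>
    simp [shiftKernel_apply, shift, Matrix.gram_apply, hm, hn]

lemma isHermitian_shiftKernel (l : Idx d) {K : Matrix (Idx d) (Idx d) ℂ} (hK : K.IsHermitian) :
    (shiftKernel l K).IsHermitian := by
  ext m n
  simp only [Matrix.conjTranspose_apply, shiftKernel_apply, inf_comm n m, apply_ite star, star_zero,
    hK.apply]

lemma kernelForm_shiftKernel (l : Idx d) (K : Matrix (Idx d) (Idx d) ℂ) (x : Idx d →₀ ℂ) :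
    kernelForm x (shiftKernel l K)
      = kernelForm (x.comapDomain (· + l) (add_left_injective l).injOn) K := by
  have hrange : ∀ n, n ∉ Set.range (· + l) → ¬ l ≤ n :=
    fun n hn h => hn ⟨n - l, tsub_add_cancel_of_le h⟩
  simp only [kernelForm_apply, Finsupp.sum, Finsupp.comapDomain_support, Finsupp.comapDomain_apply]
  rw [← Finset.sum_preimage (· + l) _ (add_left_injective l).injOn _
    fun m _ hm => Finset.sum_eq_zero fun n _ => by simp [shiftKernel_apply, hrange m hm]]
  refine Finset.sum_congr rfl fun m _ => ?_
  rw [← Finset.sum_preimage (· + l) _ (add_left_injective l).injOn _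
    fun n _ hn => by simp [shiftKernel_apply, hrange n hn]]
  simp only [shiftKernel_apply_add]

theorem posSemidef_of_sub_sum_shiftKernel {K : Matrix (Idx d) (Idx d) ℂ} (hK : K.IsHermitian)
    (h : (K - ∑ j, shiftKernel (e d j) K).PosSemidef) : K.PosSemidef := by
  suffices hform : ∀ N, ∀ x : Idx d →₀ ℂ, (∀ n ∈ x.support, ∑ i, n i < N) → 0 ≤ kernelForm x K from
    posSemidef_iff_kernelForm.2 ⟨hK, fun x => hform (x.support.sup (fun n => ∑ i, n i) + 1) x
      fun n hn => Nat.lt_succ_of_le (Finset.le_sup (f := fun n : Idx d => ∑ i, n i) hn)⟩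
  intro N
  induction N with
  | zero =>
    intro x hx
    have hx0 : x = 0 := by
      rw [← Finsupp.support_eq_empty]
      exact Finset.eq_empty_of_forall_notMem fun n hn => absurd (hx n hn) (Nat.not_lt_zero _)
    simp [hx0, kernelForm_apply]
  | succ N ih =>
    intro x hx
    have hshift : 0 ≤ kernelForm x (∑ j, shiftKernel (e d j) K) := by
      rw [map_sum]
      refine Finset.sum_nonneg fun j _ => ?_
      rw [kernelForm_shiftKernel]
      refine ih _ fun n hn => ?_
      have hn' : ∑ i, (n + e d j) i < N + 1 := hx _ (by simpa using hn)
      simpa [Finset.sum_add_distrib, sum_e] using hn'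
    have hdiff := (posSemidef_iff_kernelForm.1 h).2 x
    rw [map_sub, sub_nonneg] at hdiff
    exact hshift.trans hdiff

end Kernels

section SzegoSum

variable {d : ℕ}

/-- Multiplication of a kernel by the reproducing kernel `1 / (1 - ⟨z, w⟩) = ∑ β(k) (z w̄)^k` of the
Drury–Arveson space, on coefficients. -/
def szegoSum (R : Matrix (Idx d) (Idx d) ℂ) : Matrix (Idx d) (Idx d) ℂ :=
  Matrix.of fun m n => ∑ k ∈ Finset.Iic (m ⊓ n), beta d k • shiftKernel k R m n

variable (R : Matrix (Idx d) (Idx d) ℂ)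

lemma szegoSum_apply (m n : Idx d) :
    szegoSum R m n = ∑ k ∈ Finset.Iic (m ⊓ n), beta d k • shiftKernel k R m n := rfl

lemma isHermitian_szegoSum {R : Matrix (Idx d) (Idx d) ℂ} (hR : R.IsHermitian) :
    (szegoSum R).IsHermitian := by
  ext m n
  simp only [Matrix.conjTranspose_apply, szegoSum_apply, star_sum, star_smul, star_trivial,
    (isHermitian_shiftKernel _ hR).apply, inf_comm n m]

lemma szegoSum_sub (R S : Matrix (Idx d) (Idx d) ℂ) :
    szegoSum (R - S) = szegoSum R - szegoSum S := by
  ext m n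
  simp only [szegoSum_apply, map_sub, Matrix.sub_apply, smul_sub, Finset.sum_sub_distrib]

lemma shiftKernel_szegoSum (l m n : Idx d) :
    shiftKernel l (szegoSum R) m n
      = ∑ k ∈ Finset.Iic (m ⊓ n), shift l (beta d) k • shiftKernel k R m n := by
  rw [sum_Iic_shift_smul, shiftKernel_apply, szegoSum_apply]
  refine if_ctx_congr Iff.rfl (fun h => ?_) fun _ => rfl
  have hinf : (m - l) ⊓ (n - l) = m ⊓ n - l := by
    ext i
    simp only [Pi.inf_apply, Pi.sub_apply]
    omega
  rw [hinf]
  refine Finset.sum_congr rfl fun k _ => ?_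
  rw [← shiftKernel_shiftKernel, shiftKernel_apply l, if_pos h]

lemma szegoSum_sub_sum_shiftKernel :
    szegoSum R - ∑ j, shiftKernel (e d j) (szegoSum R) = R := by
  ext m n
  have hzero : (0 : Idx d) ∈ Finset.Iic (m ⊓ n) := by simp
  have hcoeff : ∀ k ≠ 0, (beta d k - ∑ j, shift (e d j) (beta d) k) • shiftKernel k R m n = 0 :=
    fun k hk => by rw [sum_shift_e_beta hk, sub_self, zero_smul]
  have he : ∀ j, ¬ e d j ≤ 0 := fun j => by rw [e_le_iff]; exact lt_irrefl 0
  simp only [Matrix.sub_apply, Matrix.sum_apply, shiftKernel_szegoSum, szegoSum_apply]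
  rw [Finset.sum_comm, ← Finset.sum_sub_distrib]
  simp only [← Finset.sum_smul, ← sub_smul]
  rw [Finset.sum_eq_single_of_mem 0 hzero fun k _ => hcoeff k]
  simp [shift_of_not_le _ (he _), beta_zero, shiftKernel_zero]

end SzegoSum

section ShiftRecursion

variable {d : ℕ} {M : Type*} [Zero M]

lemma exists_shift_recursion (Φ : Idx d → (Fin d → M) → M) :
    ∃ u : Idx d → M, ∀ n, u n = Φ n fun j => shift (e d j) u n := by
  refine ⟨wellFounded_lt.fix fun n u =>
    Φ n fun j => if h : e d j ≤ n then u (n - e d j) (tsub_e_lt h) else 0, fun n => ?_⟩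
  rw [WellFounded.fix_eq]
  simp only [shift, dite_eq_ite]

lemma eqOn_of_shift_recursion {X : Set (Idx d)} (hX : IsLowerSet X) {u v : Idx d → M}
    {Φ : Idx d → (Fin d → M) → M} (hu : ∀ n ∈ X, u n = Φ n fun j => shift (e d j) u n)
    (hv : ∀ n ∈ X, v n = Φ n fun j => shift (e d j) v n) : Set.EqOn u v X := by
  intro n
  induction n using WellFoundedLT.induction with
  | ind n ih =>
    intro hn
    rw [hu n hn, hv n hn]
    congr! 2 with j
    exact shift_congr fun hj => ih _ (tsub_e_lt hj) (hX tsub_le_self hn)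

end ShiftRecursion

section Lurking

variable {d : ℕ}

/-- The coefficients of the kernel `(N² - φ(z) φ(w)^*) / (1 - ⟨z, w⟩)` of a power series `φ`, which
is positive exactly if multiplication by `φ` on the Drury–Arveson space has norm at most `N`. -/
def deBrangesKernel (φ : Idx d → ℂ) (N : ℝ) : Matrix (Idx d) (Idx d) ℂ :=
  szegoSum (Matrix.gram ℂ (Pi.single 0 (N : ℂ)) - Matrix.gram ℂ (star φ))

lemma isHermitian_deBrangesKernel (φ : Idx d → ℂ) (N : ℝ) : (deBrangesKernel φ N).IsHermitian :=
  isHermitian_szegoSum ((Matrix.isHermitian_gram ℂ _).sub (Matrix.isHermitian_gram ℂ _))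

lemma deBrangesKernel_sub_sum_shiftKernel (φ : Idx d → ℂ) (N : ℝ) :
    deBrangesKernel φ N - ∑ j, shiftKernel (e d j) (deBrangesKernel φ N)
      = Matrix.gram ℂ (Pi.single 0 (N : ℂ)) - Matrix.gram ℂ (star φ) :=
  szegoSum_sub_sum_shiftKernel _

variable {H : Type*} [NormedAddCommGroup H] [InnerProductSpace ℂ H]

/-- The space `ℂ ⊕ H^d` on which the lurking isometry is defined. -/
abbrev LurkingSpace (d : ℕ) (H : Type*) := WithLp 2 (ℂ × PiLp 2 fun _ : Fin d => H)

/-- The vectors `(N δ_{n,0}, (v_{n - e_j})_j)`, which the lurking isometry maps to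
`(φ(n)^*, v_n)` when `v` represents the kernel of `φ`. -/
def lurkingVector (N : ℝ) (n : Idx d) (w : Fin d → H) : LurkingSpace d H :=
  WithLp.toLp 2 (Pi.single (M := fun _ => ℂ) 0 (N : ℂ) n, WithLp.toLp 2 w)

lemma gram_lurkingVector (N : ℝ) (v : Idx d → H) :
    Matrix.gram ℂ (fun n => lurkingVector N n fun j => shift (e d j) v n)
      = Matrix.gram ℂ (Pi.single 0 (N : ℂ)) + ∑ j, shiftKernel (e d j) (Matrix.gram ℂ v) := by
  simp only [lurkingVector, gram_toLp_prod, gram_toLp_pi, shiftKernel_gram]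

theorem posSemidef_deBrangesKernel {φ : Idx d → ℂ} {N : ℝ} {u : Idx d → H}
    {V : LurkingSpace d H →L[ℂ] WithLp 2 (ℂ × H)} (hV : ‖V‖ ≤ 1)
    (h : ∀ n, V (lurkingVector N n fun j => shift (e d j) u n) = WithLp.toLp 2 (star φ n, u n)) :
    (deBrangesKernel φ N).PosSemidef := by
  set K := deBrangesKernel φ N with hK
  set G := Matrix.gram ℂ u
  have hdefect := posSemidef_gram_sub_gram
    (fun n => lurkingVector N n fun j => shift (e d j) u n) hV
  have hsplit : K - G - ∑ j, shiftKernel (e d j) (K - G)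
      = (K - ∑ j, shiftKernel (e d j) K) - (G - ∑ j, shiftKernel (e d j) G) := by
    simp only [map_sub, Finset.sum_sub_distrib]
    abel
  have hKG : (K - G).PosSemidef := by
    refine posSemidef_of_sub_sum_shiftKernel
      ((isHermitian_deBrangesKernel φ N).sub (Matrix.isHermitian_gram ℂ u)) ?_
    rw [hsplit, hK, deBrangesKernel_sub_sum_shiftKernel]
    convert hdefect using 1
    rw [gram_lurkingVector, show (V ∘ _) = _ from funext h, gram_toLp_prod]
    abel
  simpa [G] using hKG.add (posSemidef_gram u)

theorem exists_lurking_contraction [CompleteSpace H] {X : Set (Idx d)} (hX : IsLowerSet X)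
    {φ : Idx d → ℂ} {N : ℝ} {v : Idx d → H}
    (hv : ∀ m ∈ X, ∀ n ∈ X, Matrix.gram ℂ v m n = deBrangesKernel φ N m n) :
    ∃ V : LurkingSpace d H →L[ℂ] WithLp 2 (ℂ × H), ‖V‖ ≤ 1 ∧ ∀ n ∈ X,
      V (lurkingVector N n fun j => shift (e d j) v n) = WithLp.toLp 2 (star φ n, v n) := by
  have hgram : Matrix.gram ℂ (fun n : X => lurkingVector N (n : Idx d) fun j => shift (e d j) v n)
      = Matrix.gram ℂ fun n : X => WithLp.toLp 2 (star φ n, v n) := by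
    ext m n
    have hshift : ∀ j, shiftKernel (e d j) (Matrix.gram ℂ v) m n
        = shiftKernel (e d j) (deBrangesKernel φ N) m n := fun j => by
      simp only [shiftKernel_apply]
      rw [hv _ (hX tsub_le_self m.2) _ (hX tsub_le_self n.2)]
    have hrec := congrFun₂ (deBrangesKernel_sub_sum_shiftKernel φ N) m n
    have hin := congrFun₂ (gram_lurkingVector N v) m n
    have hout := congrFun₂ (gram_toLp_prod (star φ) v) m n
    simp only [Matrix.add_apply, Matrix.sub_apply, Matrix.sum_apply, hshift, hv m m.2 n n.2]
      at hrec hin hout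
    calc _ = _ := hin
      _ = _ := by linear_combination -hrec
      _ = _ := hout.symm
  have hpos := Matrix.PosSemidef.zero (n := X) (R := ℂ)
  rw [← sub_eq_zero.2 hgram] at hpos
  obtain ⟨V, hV, hVX⟩ := exists_contraction_of_posSemidef hpos
  exact ⟨V, hV, fun n hn => hVX ⟨n, hn⟩⟩

theorem exists_eqOn_posSemidef_deBrangesKernel {X : Set (Idx d)} (hX : IsLowerSet X)
    {φ : Idx d → ℂ} {N : ℝ}
    (hφ : ((deBrangesKernel φ N).submatrix (↑) (↑) : Matrix X X ℂ).PosSemidef) :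
    ∃ ψ : Idx d → ℂ, Set.EqOn ψ φ X ∧ (deBrangesKernel ψ N).PosSemidef := by
  obtain ⟨H, _, _, _, v₀, hv₀⟩ := exists_gram_eq hφ
  let v : Idx d → H := Function.extend (↑) v₀ 0
  have hv : ∀ m ∈ X, ∀ n ∈ X, Matrix.gram ℂ v m n = deBrangesKernel φ N m n := by
    intro m hm n hn
    have hvX : ∀ n : X, v n = v₀ n := Subtype.val_injective.extend_apply v₀ 0
    rw [Matrix.gram_apply, hvX ⟨m, hm⟩, hvX ⟨n, hn⟩]
    exact congrFun₂ hv₀ ⟨m, hm⟩ ⟨n, hn⟩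
  obtain ⟨V, hV, hVv⟩ := exists_lurking_contraction hX hv
  obtain ⟨u, hu⟩ := exists_shift_recursion fun n w => (V (lurkingVector N n w)).snd
  have huv : Set.EqOn u v X :=
    eqOn_of_shift_recursion (Φ := fun n w => (V (lurkingVector N n w)).snd) hX
      (fun n _ => hu n) fun n hn => (congrArg WithLp.snd (hVv n hn)).symm
  let ψ : Idx d → ℂ := fun n => star (V (lurkingVector N n fun j => shift (e d j) u n)).fst
  refine ⟨ψ, fun n hn => ?_, posSemidef_deBrangesKernel (u := u) hV fun n => ?_⟩
  · have hshift : ∀ j, shift (e d j) u n = shift (e d j) v n := fun j =>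
      shift_congr fun _ => huv (hX tsub_le_self hn)
    simp only [ψ, hshift, hVv n hn]
    exact star_star _
  · rw [hu n]
    simp only [Pi.star_apply, ψ, star_star]
    rfl

end Lurking

section DruryArvesonSpace

variable {d : ℕ}

/-- The Drury–Arveson space, with the orthonormal basis of normalized monomials
`β(n)^{1/2} z^n`; `taylorCoeff` turns its elements into the coefficient families of `MemHd`. -/
abbrev Hd (d : ℕ) := lp (fun _ : Idx d => ℂ) 2

/-- The element of the Drury–Arveson space representing the `n`-th Taylor coefficient. -/
def coeffVector (n : Idx d) : Hd d := lp.single 2 n (√(beta d n) : ℂ)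

/-- The Taylor coefficients of an element of the Drury–Arveson space. -/
def taylorCoeff : Hd d →ₗ[ℂ] Idx d → ℂ :=
  LinearMap.pi fun n => innerₛₗ ℂ (coeffVector n)

lemma taylorCoeff_apply (f : Hd d) (n : Idx d) : taylorCoeff f n = ⟪coeffVector n, f⟫_ℂ := rfl

lemma taylorCoeff_eq_mul (f : Hd d) (n : Idx d) : taylorCoeff f n = √(beta d n) * f n := by
  rw [taylorCoeff_apply, coeffVector, lp.inner_single_left]
  simp [mul_comm]

lemma norm_taylorCoeff_sq_div_beta (f : Hd d) (n : Idx d) :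
    ‖taylorCoeff f n‖ ^ 2 / beta d n = ‖f n‖ ^ 2 := by
  rw [taylorCoeff_eq_mul, norm_mul, mul_pow, Complex.norm_real, Real.norm_eq_abs, sq_abs,
    Real.sq_sqrt (beta_pos n).le, mul_div_cancel_left₀ _ (beta_pos n).ne']

lemma hasSum_norm_taylorCoeff_sq (f : Hd d) :
    HasSum (fun n => ‖taylorCoeff f n‖ ^ 2 / beta d n) (‖f‖ ^ 2) := by
  simp only [norm_taylorCoeff_sq_div_beta]
  simpa using lp.hasSum_norm (p := 2) (by norm_num) f

lemma memHd_taylorCoeff (f : Hd d) : MemHd d (taylorCoeff f) :=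
  (hasSum_norm_taylorCoeff_sq f).summable

lemma hdNorm_taylorCoeff (f : Hd d) : hdNorm d (taylorCoeff f) = ‖f‖ := by
  rw [hdNorm, (hasSum_norm_taylorCoeff_sq f).tsum_eq, Real.sqrt_sq (norm_nonneg f)]

lemma taylorCoeff_injective : Function.Injective (taylorCoeff (d := d)) := by
  refine (injective_iff_map_eq_zero _).2 fun f hf => norm_eq_zero.1 ?_
  rw [← hdNorm_taylorCoeff, hf]
  simp [hdNorm]

lemma memHd_iff_exists_taylorCoeff {a : Idx d → ℂ} : MemHd d a ↔ ∃ f, taylorCoeff f = a := by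
  refine ⟨fun ha => ?_, fun ⟨f, hf⟩ => hf ▸ memHd_taylorCoeff f⟩
  have hsqrt : ∀ n, √(beta d n) ≠ 0 := fun n => (Real.sqrt_pos.2 (beta_pos n)).ne'
  let f : Idx d → ℂ := fun n => a n / √(beta d n)
  have hf : Memℓp f 2 := by
    refine memℓp_gen (ha.congr fun n => ?_)
    simp [f, div_pow, Real.sq_sqrt (beta_pos n).le]
  refine ⟨⟨f, hf⟩, funext fun n => ?_⟩
  rw [taylorCoeff_eq_mul]
  exact mul_div_cancel₀ _ (Complex.ofReal_ne_zero.2 (hsqrt n))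

lemma inner_coeffVector (m n : Idx d) :
    ⟪coeffVector m, coeffVector n⟫_ℂ = if m = n then (beta d n : ℂ) else 0 := by
  rw [coeffVector, coeffVector, lp.inner_single_left, lp.coeFn_single, Pi.single_apply]
  split_ifs with h
  · subst h
    simp only [RCLike.inner_apply, Complex.conj_ofReal]
    exact_mod_cast Real.mul_self_sqrt (beta_pos m).le
  · exact inner_zero_right _

end DruryArvesonSpace

section Multiplication

variable {d : ℕ}

/-- The image of `coeffVector n` under the adjoint of multiplication by `∑ k, conj (u k) z^k`. -/
def adjointVector (u : Idx d → ℂ) (n : Idx d) : Hd d :=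
  ∑ k ∈ Finset.Iic n, u k • coeffVector (n - k)

lemma inner_adjointVector_star (φ : Idx d → ℂ) (n : Idx d) (f : Hd d) :
    ⟪adjointVector (star φ) n, f⟫_ℂ = mconv d φ (taylorCoeff f) n := by
  rw [adjointVector, mconv, sum_inner]
  exact Finset.sum_congr rfl fun k _ => by
    rw [inner_smul_left, Pi.star_apply, RCLike.star_def, Complex.conj_conj, taylorCoeff_apply]

lemma adjointVector_single (c : ℂ) (n : Idx d) :
    adjointVector (Pi.single 0 c) n = c • coeffVector n := by
  rw [adjointVector, Finset.sum_eq_single_of_mem 0 (by simp)]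
  · simp
  · intro k _ hk
    simp [hk]

lemma gram_adjointVector (u : Idx d → ℂ) :
    Matrix.gram ℂ (adjointVector u) = szegoSum (Matrix.gram ℂ u) := by
  ext m n
  have hterm : ∀ k ∈ Finset.Iic m, ∑ l ∈ Finset.Iic n,
      ⟪u (m - k) • coeffVector k, u (n - l) • coeffVector l⟫_ℂ
        = if k ≤ n then beta d k • ⟪u (m - k), u (n - k)⟫_ℂ else 0 := fun k _ => by
    simp only [inner_smul_left, inner_smul_right, inner_coeffVector, mul_ite, mul_zero,
      Finset.sum_ite_eq, Finset.mem_Iic, RCLike.inner_apply, Complex.real_smul]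
    congr 1
    ring
  simp only [Matrix.gram_apply, adjointVector, sum_Iic_tsub _ fun k l => u k • coeffVector l,
    szegoSum_apply, shiftKernel_apply, sum_inner, inner_sum]
  rw [Finset.sum_comm, Finset.sum_congr rfl hterm, ← Finset.sum_filter]
  refine Finset.sum_congr ?_ fun k hk => ?_
  · ext k
    simp
  · rw [if_pos (Finset.mem_Iic.1 hk)]

lemma deBrangesKernel_eq_gram_sub_gram (φ : Idx d → ℂ) (N : ℝ) :
    deBrangesKernel φ N = Matrix.gram ℂ (fun n => (N : ℂ) • coeffVector n)
      - Matrix.gram ℂ (adjointVector (star φ)) := by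
  rw [deBrangesKernel, szegoSum_sub, ← gram_adjointVector, ← gram_adjointVector]
  simp only [funext (adjointVector_single (N : ℂ))]

theorem exists_multiplication_of_posSemidef {ψ : Idx d → ℂ} {N : ℝ} (hN : 0 ≤ N)
    (hψ : (deBrangesKernel ψ N).PosSemidef) :
    ∃ B : Hd d →L[ℂ] Hd d, ‖B‖ ≤ N ∧ ∀ f, taylorCoeff (B f) = mconv d ψ (taylorCoeff f) := by
  rw [deBrangesKernel_eq_gram_sub_gram] at hψ
  obtain ⟨V, hV, hVψ⟩ := exists_contraction_of_posSemidef hψ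
  refine ⟨(N : ℂ) • V.adjoint, ?_, fun f => funext fun n => ?_⟩
  · rw [norm_smul, Complex.norm_real, Real.norm_of_nonneg hN, LinearIsometryEquiv.norm_map]
    exact mul_le_of_le_one_right hN hV
  · rw [← inner_adjointVector_star, ← hVψ, map_smul, taylorCoeff_apply, smul_apply,
      inner_smul_right, inner_smul_left, ContinuousLinearMap.adjoint_inner_right,
      Complex.conj_ofReal]

end Multiplication

section Compression

variable {d : ℕ} {X : Set (Idx d)}

lemma MemHd.indicator {a : Idx d → ℂ} (ha : MemHd d a) : MemHdX d X (X.indicator a) := by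
  refine ⟨fun n hn => Set.indicator_of_notMem hn a, Summable.of_nonneg_of_le
    (fun n => div_nonneg (sq_nonneg _) (beta_pos n).le) (fun n => ?_) ha⟩
  gcongr
  · exact (beta_pos n).le
  · exact norm_indicator_le_norm_self a n

lemma hdNorm_indicator_le {a : Idx d → ℂ} (ha : MemHd d a) :
    hdNorm d (X.indicator a) ≤ hdNorm d a := by
  refine Real.sqrt_le_sqrt (Summable.tsum_le_tsum (fun n => ?_) ha.indicator.2 ha)
  gcongr
  · exact (beta_pos n).le
  · exact norm_indicator_le_norm_self a n

lemma indicator_eq_of_memHdX {a : Idx d → ℂ} (ha : MemHdX d X a) : X.indicator a = a :=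
  Set.indicator_eq_self.2 fun n hn => by_contra fun h => hn (ha.1 n h)

lemma opNormHdX_eq_norm {T : (Idx d → ℂ) → Idx d → ℂ} {A : Hd d →L[ℂ] Hd d}
    (hA : ∀ f, taylorCoeff (A f) = T (X.indicator (taylorCoeff f))) :
    opNormHdX d X T = ‖A‖ := by
  rw [opNormHdX, ContinuousLinearMap.norm_def]
  congr 1
  ext C
  refine and_congr_right fun hC => ⟨fun h f => ?_, fun h a ha => ?_⟩
  · calc ‖A f‖ = hdNorm d (T (X.indicator (taylorCoeff f))) := by rw [← hdNorm_taylorCoeff, hA]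
      _ ≤ C * hdNorm d (X.indicator (taylorCoeff f)) := h _ (memHd_taylorCoeff f).indicator
      _ ≤ C * ‖f‖ := by
        rw [← hdNorm_taylorCoeff f]
        exact mul_le_mul_of_nonneg_left (hdNorm_indicator_le (memHd_taylorCoeff f)) hC
  · obtain ⟨f, rfl⟩ := memHd_iff_exists_taylorCoeff.1 ha.2
    have hAf := hA f
    rw [indicator_eq_of_memHdX ha] at hAf
    simpa only [← hAf, hdNorm_taylorCoeff] using h f

lemma indicator_mconv_congr (hX : IsLowerSet X) {φ ψ a b : Idx d → ℂ} (hφ : Set.EqOn φ ψ X)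
    (ha : Set.EqOn a b X) : X.indicator (mconv d φ a) = X.indicator (mconv d ψ b) :=
  Set.indicator_congr fun n hn => Finset.sum_congr rfl fun k hk => by
    rw [hφ (hX (Finset.mem_Iic.1 hk) hn), ha (hX tsub_le_self hn)]

theorem exists_compression (hX : IsLowerSet X) {φ : Idx d → ℂ}
    (hφ : ∀ a, MemHdX d X a → MemHd d (X.indicator (mconv d φ a))) :
    ∃ A : Hd d →L[ℂ] Hd d, ∀ f, taylorCoeff (A f) = X.indicator (mconv d φ (taylorCoeff f)) := by
  have hw : ∀ f n, ⟪X.indicator (adjointVector (star φ)) n, f⟫_ℂ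
      = X.indicator (mconv d φ (taylorCoeff f)) n := by
    intro f n
    by_cases hn : n ∈ X
    · rw [Set.indicator_of_mem hn, Set.indicator_of_mem hn, inner_adjointVector_star]
    · rw [Set.indicator_of_notMem hn, Set.indicator_of_notMem hn, inner_zero_left]
  obtain ⟨A, hA⟩ := exists_continuousLinearMap_inner_eq taylorCoeff_injective
    (w := X.indicator (adjointVector (star φ))) fun f => by
      obtain ⟨g, hg⟩ := memHd_iff_exists_taylorCoeff.1
        (hφ _ (memHd_taylorCoeff f).indicator)
      refine ⟨g, fun n => ?_⟩
      rw [hw f, ← taylorCoeff_apply, hg]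
      exact congrFun (indicator_mconv_congr hX (fun _ _ => rfl) Set.eqOn_indicator) n
  exact ⟨A, fun f => funext fun n => (hA f n).trans (hw f n)⟩

theorem posSemidef_submatrix_deBrangesKernel {φ : Idx d → ℂ} {A : Hd d →L[ℂ] Hd d}
    (hA : ∀ f, taylorCoeff (A f) = X.indicator (mconv d φ (taylorCoeff f))) :
    ((deBrangesKernel φ ‖A‖).submatrix (↑) (↑) : Matrix X X ℂ).PosSemidef := by
  have hadj : ∀ n : X, A.adjoint (coeffVector (n : Idx d)) = adjointVector (star φ) n := by
    refine fun n => ext_inner_right ℂ fun f => ?_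
    rw [ContinuousLinearMap.adjoint_inner_left, ← taylorCoeff_apply, hA,
      Set.indicator_of_mem n.2, inner_adjointVector_star]
  have hsplit : ((deBrangesKernel φ ‖A‖).submatrix (↑) (↑) : Matrix X X ℂ)
      = ‖A.adjoint‖ ^ 2 • Matrix.gram ℂ (fun n : X => coeffVector (n : Idx d))
        - Matrix.gram ℂ (A.adjoint ∘ fun n : X => coeffVector (n : Idx d)) := by
    ext m n
    simp only [deBrangesKernel_eq_gram_sub_gram, Matrix.submatrix_apply, Matrix.sub_apply,
      Matrix.smul_apply, Matrix.gram_apply, Function.comp_apply, hadj, inner_smul_left,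
      inner_smul_right, Complex.conj_ofReal, Complex.real_smul, LinearIsometryEquiv.norm_map]
    push_cast
    ring
  rw [hsplit]
  exact Matrix.posSemidef_opNorm_smul_gram_sub_gram _ _

lemma isMultiplier_of_taylorCoeff_eq {ψ : Idx d → ℂ} {B : Hd d → Hd d}
    (hB : ∀ f, taylorCoeff (B f) = mconv d ψ (taylorCoeff f)) : IsMultiplier d ψ := by
  intro a ha
  obtain ⟨f, rfl⟩ := memHd_iff_exists_taylorCoeff.1 ha
  exact hB f ▸ memHd_taylorCoeff (B f)

lemma multNorm_le_norm {ψ : Idx d → ℂ} {B : Hd d →L[ℂ] Hd d}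
    (hB : ∀ f, taylorCoeff (B f) = mconv d ψ (taylorCoeff f)) : multNorm d ψ ≤ ‖B‖ := by
  refine csInf_le ⟨0, fun _ h => h.1⟩ ⟨norm_nonneg B, fun a ha => ?_⟩
  obtain ⟨f, rfl⟩ := memHd_iff_exists_taylorCoeff.1 ha
  rw [← hB, hdNorm_taylorCoeff, hdNorm_taylorCoeff]
  exact B.le_opNorm f

lemma hdInner_indicator_left {f : Idx d → ℂ} (hf : ∀ n ∉ X, f n = 0) (a : Idx d → ℂ) :
    hdInner d (X.indicator a) f = hdInner d a f :=
  tsum_congr fun n => by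
    by_cases hn : n ∈ X
    · rw [Set.indicator_of_mem hn]
    · simp [hf n hn]

end Compression

section Polynomials

variable {d : ℕ} {X : Set (Idx d)}

lemma MopX_indicator_shift (hX : IsLowerSet X) (j : Fin d) (k : Idx d) (a : Idx d → ℂ) :
    MopX d X j (X.indicator (shift k a)) = X.indicator (shift (k + e d j) a) := by
  rw [MopX, Mop_eq_shift, ← shift_shift]
  exact Set.indicator_congr fun n hn => shift_congr fun _ =>
    Set.indicator_of_mem (hX tsub_le_self hn) _

lemma iterate_MopX_indicator_shift (hX : IsLowerSet X) (j : Fin d) (t : ℕ) (k : Idx d)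
    (a : Idx d → ℂ) :
    (MopX d X j)^[t] (X.indicator (shift k a)) = X.indicator (shift (k + t • e d j) a) := by
  induction t with
  | zero => simp
  | succ t ih =>
    rw [Function.iterate_succ_apply', ih, MopX_indicator_shift hX, succ_nsmul, add_assoc]

lemma foldr_MopX_indicator (hX : IsLowerSet X) (k : Idx d) (a : Idx d → ℂ) (L : List (Fin d)) :
    ((L.map fun j => (MopX d X j)^[k j]).foldr (· ∘ ·) id) (X.indicator a)
      = X.indicator (shift (L.map fun j => k j • e d j).sum a) := by
  induction L with
  | nil => simp [shift_zero]
  | cons j L ih =>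
    simp only [List.map_cons, List.foldr_cons, Function.comp_apply, ih,
      iterate_MopX_indicator_shift hX, List.sum_cons, add_comm]

lemma opPow_MopX_indicator (hX : IsLowerSet X) (k : Idx d) (a : Idx d → ℂ) :
    opPow d (MopX d X) k (X.indicator a) = X.indicator (shift k a) := by
  have hk : ((List.finRange d).map fun j => k j • e d j).sum = k := by
    rw [← List.ofFn_eq_map, List.sum_ofFn]
    ext i
    simp [e, Finset.sum_apply]
  rw [opPow, List.ofFn_eq_map, foldr_MopX_indicator hX, hk]

lemma sum_coeff_mul_shift (Q : MvPolynomial (Fin d) ℂ) (a : Idx d → ℂ) (n : Idx d) :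
    ∑ k ∈ Q.support, Q.coeff k * shift (⇑k) a n = mconv d (Qhat d Q) a n := by
  have hmap : ∑ k ∈ Q.support, Q.coeff k * shift (⇑k) a n
      = ∑ k ∈ Q.support.map Finsupp.equivFunOnFinite.toEmbedding, Qhat d Q k * shift k a n := by
    simp only [Finset.sum_map, Qhat, Equiv.coe_toEmbedding, Equiv.symm_apply_apply]
    rfl
  rw [hmap, mconv]
  refine Finset.sum_congr_of_eq_on_inter (fun k _ hk => ?_) (fun k _ hk => ?_) fun k _ hk => ?_
  · rw [shift_of_not_le _ (by simpa using hk), mul_zero]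
  · have hQk : Qhat d Q k = 0 := by simpa [Qhat] using hk
    rw [hQk, zero_mul]
  · rw [shift_of_le _ (Finset.mem_Iic.1 hk)]

theorem polyOp_MopX_indicator (hX : IsLowerSet X) (Q : MvPolynomial (Fin d) ℂ) (a : Idx d → ℂ) :
    polyOp d Q (MopX d X) (X.indicator a) = X.indicator (mconv d (Qhat d Q) a) := by
  ext n
  simp only [polyOp, opPow_MopX_indicator hX]
  by_cases hn : n ∈ X
  · simp only [Set.indicator_of_mem hn, sum_coeff_mul_shift]
  · simp only [Set.indicator_of_notMem hn, mul_zero, Finset.sum_const_zero]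

lemma memHd_shift (k : Idx d) {a : Idx d → ℂ} (ha : MemHd d a) : MemHd d (shift k a) := by
  have hsupp : ∀ n ∉ Set.range (· + k), ‖shift k a n‖ ^ 2 / beta d n = 0 := fun n hn => by
    have hkn : ¬ k ≤ n := fun h => hn ⟨n - k, tsub_add_cancel_of_le h⟩
    simp [shift_of_not_le _ hkn]
  refine ((add_left_injective k).summable_iff hsupp).1 (Summable.of_nonneg_of_le
    (fun n => div_nonneg (sq_nonneg _) (beta_pos _).le) (fun n => ?_) ha)
  simp only [Function.comp_apply, shift_apply_add]
  gcongr
  · exact beta_pos n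
  · exact beta_monotone le_self_add

lemma isMultiplier_Qhat (Q : MvPolynomial (Fin d) ℂ) : IsMultiplier d (Qhat d Q) := by
  intro a ha
  choose f hf using fun k => memHd_iff_exists_taylorCoeff.1 (memHd_shift k ha)
  refine memHd_iff_exists_taylorCoeff.2 ⟨∑ k ∈ Q.support, Q.coeff k • f k, funext fun n => ?_⟩
  simp only [map_sum, map_smul, hf, Finset.sum_apply, Pi.smul_apply, smul_eq_mul,
    sum_coeff_mul_shift]

end Polynomials

theorem commutant_lifting_polynomial_general {d : ℕ} {X : Set (Idx d)}
    (hX : MonotoneSet d X) {φ : Idx d → ℂ}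
    (hφ : ∀ a, MemHdX d X a → MemHd d (X.indicator (mconv d φ a)))
    {T : (Idx d → ℂ) → Idx d → ℂ} (hT : ∀ a, MemHdX d X a → T a = X.indicator (mconv d φ a)) :
    ∃ ψ : Idx d → ℂ, IsMultiplier d ψ ∧ multNorm d ψ ≤ opNormHdX d X T ∧
      (∀ f, MemHdX d X f → ∀ g, MemHd d g →
        hdInner d (mconv d ψ g) f = hdInner d (T (X.indicator g)) f) ∧
      opNormHdX d X T = opNormHdX d X (fun a => X.indicator (mconv d ψ a)) := by
  have hlower := hX.isLowerSet
  obtain ⟨A, hA⟩ := exists_compression hlower hφ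
  obtain ⟨ψ, hψφ, hψ⟩ :=
    exists_eqOn_posSemidef_deBrangesKernel hlower (posSemidef_submatrix_deBrangesKernel hA)
  obtain ⟨B, hBA, hB⟩ := exists_multiplication_of_posSemidef (norm_nonneg A) hψ
  have hcompress : ∀ a, X.indicator (mconv d ψ a) = X.indicator (mconv d φ (X.indicator a)) :=
    fun a => indicator_mconv_congr hlower hψφ Set.eqOn_indicator.symm
  have hTψ : ∀ a, MemHd d a → T (X.indicator a) = X.indicator (mconv d ψ a) := fun a ha => by
    rw [hT _ ha.indicator, hcompress]
  have hnorm : opNormHdX d X T = ‖A‖ := opNormHdX_eq_norm fun f => by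
    rw [hA, hTψ _ (memHd_taylorCoeff f)]
    exact indicator_mconv_congr hlower hψφ.symm fun _ _ => rfl
  refine ⟨ψ, isMultiplier_of_taylorCoeff_eq hB, hnorm ▸ (multNorm_le_norm hB).trans hBA,
    fun f hf g hg => ?_, hnorm.trans (opNormHdX_eq_norm fun f => ?_).symm⟩
  · rw [hTψ g hg, hdInner_indicator_left hf.1]
  · rw [hA, hcompress, Set.indicator_indicator, Set.inter_self]
    exact indicator_mconv_congr hlower (fun _ _ => rfl) Set.eqOn_indicator.symm

/-- **commutant lifting consequence.** Let `X ⊆ ℕ^d` be monotone and `Q` a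
complex polynomial of `d` variables with `Q(M_z^X) ≠ 0`.  Then there is a multiplier `ψ`
of `H_d` with `‖ψ‖_{M(H_d)} ≤ ‖Q(M_z^X)‖` whose adjoint restricted to `H_d(X)` is
`(Q(M_z^X))^*` (equivalently `⟨M_ψ g, f⟩ = ⟨Q(M_z^X)(P_X g), f⟩` for all `g ∈ H_d`,
`f ∈ H_d(X)`); consequently `‖Q(M_z^X)‖ = ‖M_ψ|_{H_d(X)}‖`. -/
theorem commutant_lifting_polynomial (d : ℕ) (X : Set (Idx d)) (hX : MonotoneSet d X)
    (Q : MvPolynomial (Fin d) ℂ)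
    (hQ : ¬ ∀ a, MemHdX d X a → polyOp d Q (MopX d X) a = 0) :
    ∃ ψ : Idx d → ℂ, IsMultiplier d ψ ∧
      multNorm d ψ ≤ opNormHdX d X (polyOp d Q (MopX d X)) ∧
      (∀ f, MemHdX d X f → ∀ g, MemHd d g →
        hdInner d (mconv d ψ g) f
          = hdInner d (polyOp d Q (MopX d X) (X.indicator g)) f) ∧
      opNormHdX d X (polyOp d Q (MopX d X))
        = opNormHdX d X (fun a => X.indicator (mconv d ψ a)) :=
  commutant_lifting_polynomial_general hX
    (fun a ha => (isMultiplier_Qhat Q a ha.2).indicator.2)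
    fun a ha => by
      simpa only [indicator_eq_of_memHdX ha] using polyOp_MopX_indicator hX.isLowerSet Q a

end DruryArveson
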